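/- Conserved current of the dissipative real Klein–Gordon theory (eq. (4.22)): let m ∈ ℝ and let h, c : Fin D → ℝ be constant vectors with Σ_μ c μ · h μ = 2. Let φ : (Fin D → ℝ) → ℝ be a smooth solution of □φ x + Σ_μ h μ · ∂^μ φ x + m²·φ x = 0 for all x (the Euler–Lagrange equation of the dissipative Klein–Gordon Lagrangian exp(Σ_λ h λ·x λ)·((1/2)∂_μφ∂^μφ − (1/2)m²φ²)). Then, with c_ν := Σ_α η ν α · c α, the current j^μ x := exp(Σ_λ h λ · x λ)·( φ x · ∂^μ φ x + Σ_ν c_ν·( ∂^μ φ x·∂^ν φ x − η μ ν·((1/2)·Σ_{α,β} η α β·∂_α φ x·∂_β φ x − (1/2)·m²·(φ x)²) ) ) is conserved: Σ_μ ∂_μ j^μ x = 0 for all x. -/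

import Mathlib

open scoped BigOperators

noncomputable section

/-- Minkowski metric on `Fin D`. -/
def eta (D : ℕ) (μ ν : Fin D) : ℝ :=
  if μ = ν then (if (μ : ℕ) = 0 then 1 else -1) else 0

/-- Spacetime partial derivative `∂_μ F x`. -/
def pd {D : ℕ} (F : (Fin D → ℝ) → ℝ) (μ : Fin D) (x : Fin D → ℝ) : ℝ :=
  fderiv ℝ F x (Pi.single μ 1)

/-- Raised-index partial derivative `∂^μ F x`. -/
def pdu {D : ℕ} (F : (Fin D → ℝ) → ℝ) (μ : Fin D) (x : Fin D → ℝ) : ℝ :=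
  ∑ ν, eta D μ ν * pd F ν x

/-- d'Alembertian `□F x`. -/
def box {D : ℕ} (F : (Fin D → ℝ) → ℝ) (x : Fin D → ℝ) : ℝ :=
  ∑ μ, pd (fun y => pdu F μ y) μ x

/-!
The current is `j^μ = e^{h·x} J^μ` with `J^μ = (φ + c·∂φ) ∂^μφ - c^μ L`: its two parts come from
rescaling `φ` and from translating along `c`. With `E = □φ + h·∂φ + m²φ`, any `φ` of class `C²`
satisfies the off-shell Noether identity `∂_μ j^μ = e^{h·x} ((φ + c·∂φ) E + (2 - c·h) L)`. Rescaling
contributes `2L` because `L` is quadratic in `φ`, and the explicit `x`-dependence of the Lagrangian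
breaks translation invariance by `-(c·h) L`; the two cancel exactly when `c·h = 2`.
-/

section Calculus

variable {D : ℕ} {F G : (Fin D → ℝ) → ℝ} {x : Fin D → ℝ}

/-- The derivative `v·∂F` along the constant vector `v`. For a row `v = g μ` of an inverse metric
this is `∂^μ F`, so that `pdu F μ` is `pdAlong (eta D μ) F` by definition. -/
def pdAlong (v : Fin D → ℝ) (F : (Fin D → ℝ) → ℝ) (x : Fin D → ℝ) : ℝ :=
  ∑ ν, v ν * pd F ν x

/-- The divergence `∂_μ J^μ` of the vector field whose `μ`-th component is the function `J μ`. -/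
def divergence (J : Fin D → (Fin D → ℝ) → ℝ) (x : Fin D → ℝ) : ℝ :=
  ∑ μ, pd (J μ) μ x

/-- The contraction `∂_α F ∂^α G` of two gradients in the constant inverse metric `g`. -/
def gradInner (g : Fin D → Fin D → ℝ) (F G : (Fin D → ℝ) → ℝ) (x : Fin D → ℝ) : ℝ :=
  ∑ α, pd F α x * pdAlong (g α) G x

lemma pd_add (hF : DifferentiableAt ℝ F x) (hG : DifferentiableAt ℝ G x) (μ : Fin D) :
    pd (fun y => F y + G y) μ x = pd F μ x + pd G μ x := by
  simp [pd, fderiv_fun_add hF hG]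

lemma pd_sub (hF : DifferentiableAt ℝ F x) (hG : DifferentiableAt ℝ G x) (μ : Fin D) :
    pd (fun y => F y - G y) μ x = pd F μ x - pd G μ x := by
  simp [pd, fderiv_fun_sub hF hG]

lemma pd_mul (hF : DifferentiableAt ℝ F x) (hG : DifferentiableAt ℝ G x) (μ : Fin D) :
    pd (fun y => F y * G y) μ x = pd F μ x * G x + F x * pd G μ x := by
  simp [pd, fderiv_fun_mul hF hG, mul_comm, add_comm]

lemma pd_const_mul (hF : DifferentiableAt ℝ F x) (a : ℝ) (μ : Fin D) :
    pd (fun y => a * F y) μ x = a * pd F μ x := by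
  simp [pd, fderiv_const_mul hF]

lemma pd_const (a : ℝ) (μ : Fin D) : pd (fun _ => a) μ x = 0 := by
  simp [pd]

lemma pd_sum {ι : Type*} {s : Finset ι} {A : ι → (Fin D → ℝ) → ℝ}
    (hA : ∀ i ∈ s, DifferentiableAt ℝ (A i) x) (μ : Fin D) :
    pd (fun y => ∑ i ∈ s, A i y) μ x = ∑ i ∈ s, pd (A i) μ x := by
  simp [pd, fderiv_fun_sum hA]

lemma pd_exp_sum_mul (h : Fin D → ℝ) (μ : Fin D) (x : Fin D → ℝ) :
    pd (fun y => Real.exp (∑ lam, h lam * y lam)) μ x = Real.exp (∑ lam, h lam * x lam) * h μ := by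
  have hasFDerivAt_exponent : HasFDerivAt (fun y : Fin D → ℝ => ∑ lam, h lam * y lam)
      (∑ lam, h lam • (ContinuousLinearMap.proj lam : (Fin D → ℝ) →L[ℝ] ℝ)) x :=
    HasFDerivAt.fun_sum fun lam _ => (hasFDerivAt_apply lam x).const_mul (h lam)
  simp [pd, hasFDerivAt_exponent.exp.fderiv, Pi.single_apply]

lemma differentiableAt_fderiv {E E' : Type*} [NormedAddCommGroup E] [NormedSpace ℝ E]
    [NormedAddCommGroup E'] [NormedSpace ℝ E'] {f : E → E'} {a : E} (hf : ContDiffAt ℝ 2 f a) :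
    DifferentiableAt ℝ (fderiv ℝ f) a :=
  (hf.fderiv_right (m := 1) (by norm_num)).differentiableAt one_ne_zero

lemma differentiableAt_pd (hF : ContDiffAt ℝ 2 F x) (μ : Fin D) :
    DifferentiableAt ℝ (pd F μ) x :=
  (differentiableAt_fderiv hF).clm_apply (differentiableAt_const _)

lemma pd_pd_eq_fderiv_fderiv (hF : ContDiffAt ℝ 2 F x) (μ ν : Fin D) :
    pd (pd F μ) ν x = fderiv ℝ (fderiv ℝ F) x (Pi.single ν 1) (Pi.single μ 1) := by
  change fderiv ℝ (fun y => fderiv ℝ F y (Pi.single μ 1)) x (Pi.single ν 1) = _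
  simp [fderiv_clm_apply (differentiableAt_fderiv hF) (differentiableAt_const _)]

lemma pd_comm (hF : ContDiffAt ℝ 2 F x) (μ ν : Fin D) : pd (pd F μ) ν x = pd (pd F ν) μ x := by
  rw [pd_pd_eq_fderiv_fderiv hF, pd_pd_eq_fderiv_fderiv hF]
  exact hF.isSymmSndFDerivAt (by simp) _ _

lemma differentiableAt_pdAlong (hF : ContDiffAt ℝ 2 F x) (v : Fin D → ℝ) :
    DifferentiableAt ℝ (pdAlong v F) x :=
  DifferentiableAt.fun_sum fun ν _ => (differentiableAt_pd hF ν).const_mul (v ν)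

lemma pd_pdAlong (hF : ContDiffAt ℝ 2 F x) (v : Fin D → ℝ) (μ : Fin D) :
    pd (pdAlong v F) μ x = pdAlong v (pd F μ) x := by
  calc pd (pdAlong v F) μ x = ∑ ν, pd (fun y => v ν * pd F ν y) μ x :=
        pd_sum (fun ν _ => (differentiableAt_pd hF ν).const_mul (v ν)) μ
    _ = pdAlong v (pd F μ) x :=
        Finset.sum_congr rfl fun ν _ => by
          rw [pd_const_mul (differentiableAt_pd hF ν), pd_comm hF]

lemma divergence_sub {J K : Fin D → (Fin D → ℝ) → ℝ} (hJ : ∀ μ, DifferentiableAt ℝ (J μ) x)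
    (hK : ∀ μ, DifferentiableAt ℝ (K μ) x) :
    divergence (fun μ y => J μ y - K μ y) x = divergence J x - divergence K x := by
  simp only [divergence, pd_sub (hJ _) (hK _), Finset.sum_sub_distrib]

lemma divergence_mul {J : Fin D → (Fin D → ℝ) → ℝ} (hF : DifferentiableAt ℝ F x)
    (hJ : ∀ μ, DifferentiableAt ℝ (J μ) x) :
    divergence (fun μ y => F y * J μ y) x = ∑ μ, pd F μ x * J μ x + F x * divergence J x := by
  simp only [divergence, pd_mul hF (hJ _), Finset.sum_add_distrib, Finset.mul_sum]

lemma divergence_mul_const (hF : DifferentiableAt ℝ F x) (v : Fin D → ℝ) :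
    divergence (fun μ y => F y * v μ) x = pdAlong v F x := by
  rw [divergence_mul hF fun μ => differentiableAt_const (v μ)]
  simp [divergence, pd_const, pdAlong, mul_comm]

lemma divergence_exp_mul {J : Fin D → (Fin D → ℝ) → ℝ} (h : Fin D → ℝ)
    (hJ : ∀ μ, DifferentiableAt ℝ (J μ) x) :
    divergence (fun μ y => Real.exp (∑ lam, h lam * y lam) * J μ y) x =
      Real.exp (∑ lam, h lam * x lam) * (∑ μ, h μ * J μ x + divergence J x) := by
  rw [divergence_mul (by fun_prop) hJ]
  simp only [pd_exp_sum_mul, mul_assoc, ← Finset.mul_sum, mul_add]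

lemma gradInner_eq_sum_sum (g : Fin D → Fin D → ℝ) (F G : (Fin D → ℝ) → ℝ) (x : Fin D → ℝ) :
    gradInner g F G x = ∑ α, ∑ β, g α β * pd F α x * pd G β x := by
  simp only [gradInner, pdAlong, Finset.mul_sum]
  refine Finset.sum_congr rfl fun α _ => Finset.sum_congr rfl fun β _ => ?_
  ring

lemma gradInner_comm {g : Fin D → Fin D → ℝ} (hg : ∀ μ ν, g μ ν = g ν μ)
    (F G : (Fin D → ℝ) → ℝ) (x : Fin D → ℝ) : gradInner g F G x = gradInner g G F x := by
  rw [gradInner_eq_sum_sum, gradInner_eq_sum_sum, Finset.sum_comm]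
  refine Finset.sum_congr rfl fun β _ => Finset.sum_congr rfl fun α _ => ?_
  rw [hg α β]
  ring

lemma gradInner_add_left (hF : DifferentiableAt ℝ F x) (hG : DifferentiableAt ℝ G x)
    (g : Fin D → Fin D → ℝ) (H : (Fin D → ℝ) → ℝ) :
    gradInner g (fun y => F y + G y) H x = gradInner g F H x + gradInner g G H x := by
  simp only [gradInner, pd_add hF hG, add_mul, Finset.sum_add_distrib]

lemma gradInner_pdAlong_left (hF : ContDiffAt ℝ 2 F x) (g : Fin D → Fin D → ℝ)
    (v : Fin D → ℝ) (H : (Fin D → ℝ) → ℝ) :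
    gradInner g (pdAlong v F) H x = ∑ μ, v μ * gradInner g (pd F μ) H x := by
  simp only [gradInner, pd_pdAlong hF, Finset.mul_sum]
  rw [Finset.sum_comm]
  refine Finset.sum_congr rfl fun α _ => ?_
  simp only [pdAlong, pd_comm hF, Finset.sum_mul, mul_assoc]

lemma differentiableAt_gradInner (hF : ContDiffAt ℝ 2 F x) (hG : ContDiffAt ℝ 2 G x)
    (g : Fin D → Fin D → ℝ) : DifferentiableAt ℝ (gradInner g F G) x :=
  DifferentiableAt.fun_sum fun α _ =>
    (differentiableAt_pd hF α).fun_mul (differentiableAt_pdAlong hG (g α))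

lemma pd_gradInner (hF : ContDiffAt ℝ 2 F x) (hG : ContDiffAt ℝ 2 G x)
    (g : Fin D → Fin D → ℝ) (μ : Fin D) :
    pd (gradInner g F G) μ x = gradInner g (pd F μ) G x + gradInner g F (pd G μ) x := by
  have hpd (α : Fin D) : DifferentiableAt ℝ (pd F α) x := differentiableAt_pd hF α
  have hpdAlong (α : Fin D) : DifferentiableAt ℝ (pdAlong (g α) G) x :=
    differentiableAt_pdAlong hG (g α)
  calc pd (gradInner g F G) μ x = ∑ α, pd (fun y => pd F α y * pdAlong (g α) G y) μ x :=
        pd_sum (fun α _ => (hpd α).fun_mul (hpdAlong α)) μ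
    _ = gradInner g (pd F μ) G x + gradInner g F (pd G μ) x := by
        simp only [pd_mul (hpd _) (hpdAlong _), pd_pdAlong hG, pd_comm hF _ μ,
          Finset.sum_add_distrib, gradInner]

end Calculus

section KleinGordon

variable {D : ℕ} {g : Fin D → Fin D → ℝ} {φ : (Fin D → ℝ) → ℝ} {x : Fin D → ℝ}

/-- The Lagrangian `L = ½ ∂_αφ ∂^αφ - ½ m²φ²` of the free Klein–Gordon field, without the
dissipative factor `e^{h·x}`, for the constant inverse metric `g`. -/
def kleinGordonLagrangian (g : Fin D → Fin D → ℝ) (m : ℝ) (φ : (Fin D → ℝ) → ℝ)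
    (x : Fin D → ℝ) : ℝ :=
  1 / 2 * gradInner g φ φ x - 1 / 2 * m ^ 2 * φ x ^ 2

/-- The left-hand side `□φ + h_μ ∂^μφ + m²φ` of the dissipative Klein–Gordon equation for the
constant inverse metric `g`. -/
def dissipativeKleinGordon (g : Fin D → Fin D → ℝ) (m : ℝ) (h : Fin D → ℝ)
    (φ : (Fin D → ℝ) → ℝ) (x : Fin D → ℝ) : ℝ :=
  divergence (fun μ => pdAlong (g μ) φ) x + ∑ μ, h μ * pdAlong (g μ) φ x + m ^ 2 * φ x

/-- The Noether current `J^μ = (φ + c·∂φ) ∂^μφ - c^μ L` of the infinitesimal transformation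
`φ ↦ φ + ε (φ + c·∂φ)`, without the dissipative factor `e^{h·x}`. -/
def scaledTranslationCurrent (g : Fin D → Fin D → ℝ) (m : ℝ) (c : Fin D → ℝ)
    (φ : (Fin D → ℝ) → ℝ) (μ : Fin D) (x : Fin D → ℝ) : ℝ :=
  (φ x + pdAlong c φ x) * pdAlong (g μ) φ x - kleinGordonLagrangian g m φ x * c μ

lemma differentiableAt_kleinGordonLagrangian (hφ : ContDiffAt ℝ 2 φ x)
    (g : Fin D → Fin D → ℝ) (m : ℝ) : DifferentiableAt ℝ (kleinGordonLagrangian g m φ) x :=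
  ((differentiableAt_gradInner hφ hφ g).const_mul _).fun_sub
    (((hφ.differentiableAt two_ne_zero).fun_pow 2).const_mul _)

lemma pd_kleinGordonLagrangian (hg : ∀ μ ν, g μ ν = g ν μ) (hφ : ContDiffAt ℝ 2 φ x)
    (m : ℝ) (μ : Fin D) :
    pd (kleinGordonLagrangian g m φ) μ x =
      gradInner g (pd φ μ) φ x - m ^ 2 * φ x * pd φ μ x := by
  have hφ' : DifferentiableAt ℝ φ x := hφ.differentiableAt two_ne_zero
  have hkin : DifferentiableAt ℝ (gradInner g φ φ) x := differentiableAt_gradInner hφ hφ g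
  have pd_sq : pd (fun y => φ y ^ 2) μ x = 2 * φ x * pd φ μ x := by
    simp only [pow_two, pd_mul hφ' hφ']
    ring
  unfold kleinGordonLagrangian
  rw [pd_sub (hkin.const_mul _) ((hφ'.fun_pow 2).const_mul _), pd_const_mul hkin,
    pd_const_mul (hφ'.fun_pow 2), pd_gradInner hφ hφ, gradInner_comm hg φ (pd φ μ), pd_sq]
  ring

lemma pdAlong_kleinGordonLagrangian (hg : ∀ μ ν, g μ ν = g ν μ) (hφ : ContDiffAt ℝ 2 φ x)
    (m : ℝ) (c : Fin D → ℝ) :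
    pdAlong c (kleinGordonLagrangian g m φ) x =
      gradInner g (pdAlong c φ) φ x - m ^ 2 * φ x * pdAlong c φ x := by
  rw [gradInner_pdAlong_left hφ, pdAlong, pdAlong, Finset.mul_sum, ← Finset.sum_sub_distrib]
  refine Finset.sum_congr rfl fun μ _ => ?_
  rw [pd_kleinGordonLagrangian hg hφ]
  ring

lemma differentiableAt_scaledTranslationCurrent (hφ : ContDiffAt ℝ 2 φ x)
    (g : Fin D → Fin D → ℝ) (m : ℝ) (c : Fin D → ℝ) (μ : Fin D) :
    DifferentiableAt ℝ (scaledTranslationCurrent g m c φ μ) x :=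
  (((hφ.differentiableAt two_ne_zero).fun_add (differentiableAt_pdAlong hφ c)).fun_mul
    (differentiableAt_pdAlong hφ (g μ))).fun_sub
    ((differentiableAt_kleinGordonLagrangian hφ g m).mul_const (c μ))

lemma divergence_scaledTranslationCurrent (hg : ∀ μ ν, g μ ν = g ν μ)
    (hφ : ContDiffAt ℝ 2 φ x) (m : ℝ) (c : Fin D → ℝ) :
    divergence (scaledTranslationCurrent g m c φ) x =
      (φ x + pdAlong c φ x) * (divergence (fun μ => pdAlong (g μ) φ) x + m ^ 2 * φ x) +
        2 * kleinGordonLagrangian g m φ x := by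
  have hφ' : DifferentiableAt ℝ φ x := hφ.differentiableAt two_ne_zero
  have hc : DifferentiableAt ℝ (pdAlong c φ) x := differentiableAt_pdAlong hφ c
  have hgrad (μ : Fin D) : DifferentiableAt ℝ (pdAlong (g μ) φ) x :=
    differentiableAt_pdAlong hφ (g μ)
  have hL : DifferentiableAt ℝ (kleinGordonLagrangian g m φ) x :=
    differentiableAt_kleinGordonLagrangian hφ g m
  have divergence_kinetic :
      divergence (fun μ y => (φ y + pdAlong c φ y) * pdAlong (g μ) φ y) x =
        gradInner g φ φ x + gradInner g (pdAlong c φ) φ x +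
          (φ x + pdAlong c φ x) * divergence (fun μ => pdAlong (g μ) φ) x := by
    rw [divergence_mul (hφ'.fun_add hc) hgrad, ← gradInner_add_left hφ' hc, gradInner]
  unfold scaledTranslationCurrent
  rw [divergence_sub (fun μ => (hφ'.fun_add hc).fun_mul (hgrad μ)) fun μ => hL.mul_const (c μ),
    divergence_kinetic, divergence_mul_const hL, pdAlong_kleinGordonLagrangian hg hφ,
    kleinGordonLagrangian]
  ring

lemma sum_mul_scaledTranslationCurrent (g : Fin D → Fin D → ℝ) (m : ℝ) (h c : Fin D → ℝ)
    (φ : (Fin D → ℝ) → ℝ) (x : Fin D → ℝ) :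
    ∑ μ, h μ * scaledTranslationCurrent g m c φ μ x =
      (φ x + pdAlong c φ x) * ∑ μ, h μ * pdAlong (g μ) φ x -
        (∑ μ, c μ * h μ) * kleinGordonLagrangian g m φ x := by
  rw [Finset.mul_sum, Finset.sum_mul, ← Finset.sum_sub_distrib]
  refine Finset.sum_congr rfl fun μ _ => ?_
  rw [scaledTranslationCurrent]
  ring

theorem divergence_exp_mul_scaledTranslationCurrent (hg : ∀ μ ν, g μ ν = g ν μ)
    (hφ : ContDiffAt ℝ 2 φ x) (m : ℝ) (h c : Fin D → ℝ) :
    divergence (fun μ y =>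
        Real.exp (∑ lam, h lam * y lam) * scaledTranslationCurrent g m c φ μ y) x =
      Real.exp (∑ lam, h lam * x lam) *
        ((φ x + pdAlong c φ x) * dissipativeKleinGordon g m h φ x +
          (2 - ∑ μ, c μ * h μ) * kleinGordonLagrangian g m φ x) := by
  rw [divergence_exp_mul h (differentiableAt_scaledTranslationCurrent hφ g m c),
    sum_mul_scaledTranslationCurrent, divergence_scaledTranslationCurrent hg hφ,
    dissipativeKleinGordon]
  ring

theorem dissipative_klein_gordon_conserved_current_general (hg : ∀ μ ν, g μ ν = g ν μ)
    (m : ℝ) {h c : Fin D → ℝ} (hch : ∑ μ, c μ * h μ = 2) (hφ : ContDiffAt ℝ 2 φ x)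
    (hEL : dissipativeKleinGordon g m h φ x = 0) :
    divergence (fun μ y =>
      Real.exp (∑ lam, h lam * y lam) * scaledTranslationCurrent g m c φ μ y) x = 0 := by
  rw [divergence_exp_mul_scaledTranslationCurrent hg hφ, hEL, hch]
  ring

end KleinGordon

section Minkowski

variable {D : ℕ}

lemma eta_comm (μ ν : Fin D) : eta D μ ν = eta D ν μ := by
  unfold eta
  grind

lemma sum_eta_mul (v : Fin D → ℝ) (μ : Fin D) : ∑ ν, eta D μ ν * v ν = eta D μ μ * v μ := by
  simp [eta]

lemma eta_self_mul_eta_self (μ : Fin D) : eta D μ μ * eta D μ μ = 1 := by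
  by_cases hμ : (μ : ℕ) = 0 <;> simp [eta, hμ]

lemma sum_eta_mul_mul_eta (c : Fin D → ℝ) (μ : Fin D) :
    ∑ ν, (∑ α, eta D ν α * c α) * eta D μ ν = c μ := by
  calc ∑ ν, (∑ α, eta D ν α * c α) * eta D μ ν = ∑ ν, eta D μ ν * (eta D ν ν * c ν) :=
        Finset.sum_congr rfl fun ν _ => by rw [sum_eta_mul, mul_comm]
    _ = c μ := by rw [sum_eta_mul, ← mul_assoc, eta_self_mul_eta_self, one_mul]

lemma sum_eta_mul_mul_pdu (c : Fin D → ℝ) (φ : (Fin D → ℝ) → ℝ) (x : Fin D → ℝ) :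
    ∑ ν, (∑ α, eta D ν α * c α) * pdu φ ν x = pdAlong c φ x := by
  refine Finset.sum_congr rfl fun ν _ => ?_
  rw [pdu, sum_eta_mul, sum_eta_mul]
  linear_combination c ν * pd φ ν x * eta_self_mul_eta_self ν

lemma scaledTranslationCurrent_eta (m : ℝ) (c : Fin D → ℝ) (φ : (Fin D → ℝ) → ℝ) (μ : Fin D)
    (x : Fin D → ℝ) :
    scaledTranslationCurrent (eta D) m c φ μ x =
      φ x * pdu φ μ x +
        ∑ ν, (∑ α, eta D ν α * c α) *
          (pdu φ μ x * pdu φ ν x -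
            eta D μ ν * ((1 / 2) * (∑ α, ∑ β, eta D α β * pd φ α x * pd φ β x) -
              (1 / 2) * m ^ 2 * (φ x) ^ 2)) := by
  rw [← gradInner_eq_sum_sum, ← kleinGordonLagrangian]
  have contraction (L : ℝ) :
      ∑ ν, (∑ α, eta D ν α * c α) * (pdu φ μ x * pdu φ ν x - eta D μ ν * L) =
        pdAlong c φ x * pdu φ μ x - L * c μ := by
    rw [← sum_eta_mul_mul_pdu c φ x, ← sum_eta_mul_mul_eta c μ, Finset.sum_mul, Finset.mul_sum,
      ← Finset.sum_sub_distrib]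
    refine Finset.sum_congr rfl fun ν _ => ?_
    ring
  rw [contraction, scaledTranslationCurrent, pdu, ← pdAlong]
  ring

end Minkowski

/-- Conserved current of the dissipative real Klein–Gordon theory (eq. (4.22)). -/
theorem dissipative_klein_gordon_conserved_current {D : ℕ} (hD : 1 ≤ D)
    (m : ℝ) (h c : Fin D → ℝ) (hch : ∑ μ, c μ * h μ = 2)
    (φ : (Fin D → ℝ) → ℝ) (hφ : ContDiff ℝ (⊤ : ℕ∞) φ)
    (hEL : ∀ x, box φ x + (∑ μ, h μ * pdu φ μ x) + m^2 * φ x = 0) :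
    ∀ x, ∑ μ, pd (fun y =>
        Real.exp (∑ lam, h lam * y lam) *
          (φ y * pdu φ μ y +
            ∑ ν, (∑ α, eta D ν α * c α) *
              (pdu φ μ y * pdu φ ν y -
                eta D μ ν * ((1/2) * (∑ α, ∑ β, eta D α β * pd φ α y * pd φ β y) -
                  (1/2) * m^2 * (φ y)^2))) ) μ x = 0 := by
  intro x
  simp only [← scaledTranslationCurrent_eta]
  exact dissipative_klein_gordon_conserved_current_general eta_comm m hch
    (hφ.contDiffAt.of_le (by norm_cast)) (hEL x)

end
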